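/- arXiv:1810.07761 — 3 statements merged into one kernel-verified Lean document; each statement's English description precedes it below -/
import Mathlib

section
/- Let γ[·] be a random specification on Ω = E^S such that 𝒢(γ[ξ]) ≠ ∅ for ℙ-almost every ξ. Then there exists a map π : H × Ω × ℱ → [0,1], (ξ,ω,A) ↦ π[ξ](A|ω), such that: (1) for every fixed A ∈ ℱ, the map (ξ,ω) ↦ π[ξ](A|ω) is measurable with respect to the σ-algebra ⋂_{Λ ⊆ S finite} (ℋ ⊗ ℱ_{Λᶜ}); and (2) for ℙ-almost every ξ, A ↦ π[ξ](A|ω) is a probability measure on (Ω,ℱ) for every ω ∈ Ω, and π[ξ] is a (𝒢(γ[ξ]),𝒯)-kernel. -/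
open MeasureTheory Filter Topology
open scoped ENNReal NNReal

namespace GibbsMeta

variable {S E H : Type*}

/-- The sub-σ-algebra `ℱ_Δ` of the product σ-algebra on `Ω = E^S` generated by the
coordinate projections with indices in `Δ ⊆ S`. -/
def cylSigma (S E : Type*) [MeasurableSpace E] (Δ : Set S) : MeasurableSpace (S → E) :=
  ⨆ i ∈ Δ, MeasurableSpace.comap (fun ω : S → E => ω i) inferInstance

/-- The tail σ-algebra `𝒯 = ⋂_{Λ finite} ℱ_{Λᶜ}`. -/
def tailSigma (S E : Type*) [MeasurableSpace E] : MeasurableSpace (S → E) :=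
  ⨅ Λ : Finset S, cylSigma S E ((↑Λ : Set S)ᶜ)

/-- A specification: a family of proper, consistent probability kernels indexed by
finite volumes, with `γ_Λ(A|·)` being `ℱ_{Λᶜ}`-measurable. -/
structure IsSpecification [MeasurableSpace E]
    (γ : Finset S → (S → E) → Measure (S → E)) : Prop where
  prob : ∀ (Λ : Finset S) (ω : S → E), IsProbabilityMeasure (γ Λ ω)
  meas : ∀ (Λ : Finset S) (A : Set (S → E)), MeasurableSet A →
    Measurable[cylSigma S E ((↑Λ : Set S)ᶜ)] fun ω => γ Λ ω A
  proper : ∀ (Λ : Finset S) (A : Set (S → E)),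
    MeasurableSet[cylSigma S E ((↑Λ : Set S)ᶜ)] A →
    ∀ ω, γ Λ ω A = A.indicator (fun _ => (1 : ℝ≥0∞)) ω
  consistent : ∀ (Δ Λ : Finset S), Δ ⊆ Λ → ∀ (A : Set (S → E)), MeasurableSet A →
    ∀ ω, ∫⁻ σ, γ Δ σ A ∂(γ Λ ω) = γ Λ ω A

/-- The set `𝒢(γ)` of (probability) Gibbs measures for the specification `γ`,
i.e. solutions of the DLR equations. -/
def Gibbs [MeasurableSpace E] (γ : Finset S → (S → E) → Measure (S → E)) :
    Set (Measure (S → E)) :=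
  {μ | IsProbabilityMeasure μ ∧
    ∀ (Λ : Finset S) (A : Set (S → E)), MeasurableSet A → ∫⁻ ω, γ Λ ω A ∂μ = μ A}

/-- The set `ex 𝒢(γ)` of extreme points of the convex set `𝒢(γ)`. -/
def exGibbs [MeasurableSpace E] (γ : Finset S → (S → E) → Measure (S → E)) :
    Set (Measure (S → E)) :=
  {μ | μ ∈ Gibbs γ ∧ ∀ ν₁ ∈ Gibbs γ, ∀ ν₂ ∈ Gibbs γ, ∀ t : ℝ≥0∞, 0 < t → t < 1 →
    μ = t • ν₁ + (1 - t) • ν₂ → ν₁ = μ ∧ ν₂ = μ}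

/-- A random specification: a measurable family of specifications. -/
structure IsRandomSpecification [MeasurableSpace E] [MeasurableSpace H]
    (γ : H → Finset S → (S → E) → Measure (S → E)) : Prop where
  spec : ∀ ξ, IsSpecification (γ ξ)
  jointMeas : ∀ (Λ : Finset S) (A : Set (S → E)), MeasurableSet A →
    Measurable fun p : H × (S → E) => γ p.1 Λ p.2 A

/-- A `(𝒢(γ), 𝒯)`-kernel: a probability kernel `π`, `𝒯`-measurable in the boundary
condition, such that for every `μ ∈ 𝒢(γ)`, `π(A|·)` is a version of `μ(A | 𝒯)` and
`π(·|ω) ∈ 𝒢(γ)` for `μ`-a.e. `ω`, the latter event being tail measurable. -/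
structure IsGTKernel [MeasurableSpace E] (γ : Finset S → (S → E) → Measure (S → E))
    (π : (S → E) → Measure (S → E)) : Prop where
  prob : ∀ ω, IsProbabilityMeasure (π ω)
  tailMeas : ∀ A : Set (S → E), MeasurableSet A →
    Measurable[tailSigma S E] fun ω => π ω A
  condProb : ∀ μ ∈ Gibbs γ, ∀ A : Set (S → E), MeasurableSet A →
    ∀ B : Set (S → E), MeasurableSet[tailSigma S E] B →
      ∫⁻ ω in B, π ω A ∂μ = μ (A ∩ B)
  gibbsTailMeas : MeasurableSet[tailSigma S E] {ω | π ω ∈ Gibbs γ}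
  gibbsFull : ∀ μ ∈ Gibbs γ, μ {ω | π ω ∈ Gibbs γ} = 1

/-!
Fix finite volumes `L n` increasing to `S`. For every Gibbs measure `μ` of `γ[ξ]`, the DLR equations
and properness identify `γ_{L n}[ξ](A|·)` with `μ(A | ℱ_{(L n)ᶜ})`, so by Lévy's downward theorem it
converges `μ`-a.s. to `μ(A | 𝒯)`. The limit therefore does not depend on `μ`, and its `limsup`
version is measurable for `⋂_Λ (ℋ ⊗ ℱ_{Λᶜ})`, because a function which is jointly measurable and
whose `ξ`-sections are `ℱ_{Λᶜ}`-measurable is `ℋ ⊗ ℱ_{Λᶜ}`-measurable. To obtain measures rather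
than set functions, embed `Ω` into `ℝ`, take the limit only on the preimages of `(-∞, q]` with `q`
rational, and decode the resulting rational distribution function measurably. The decoded kernel
agrees `μ`-a.s. with the regular conditional probability given `𝒯`, which is a.s. a Gibbs measure by
the tower property.
-/

section LevyDownward

variable {Ω : Type*} {F : ℕ → MeasurableSpace Ω}

lemma measurable_iInf_limsup {Y : Type*} [TopologicalSpace Y] [ConditionallyCompleteLinearOrder Y]
    [OrderTopology Y] [SecondCountableTopology Y] [MeasurableSpace Y] [BorelSpace Y]
    (hF : Antitone F) {X : ℕ → Ω → Y} (hX : ∀ n, Measurable[F n] (X n)) :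
    Measurable[⨅ n, F n] fun ω => limsup (fun n => X n ω) atTop := by
  refine fun s hs => MeasurableSpace.measurableSet_iInf.2 fun N => ?_
  simp_rw [← limsup_nat_add (fun n => X n _) N]
  exact Measurable.limsup (fun n => (hX (n + N)).mono (hF (Nat.le_add_left N n)) le_rfl) hs

variable {m0 : MeasurableSpace Ω} {μ : Measure Ω}

lemma aestronglyMeasurable_iInf (hF : Antitone F) {f : Ω → ℝ}
    (hf : ∀ n, AEStronglyMeasurable[F n] f μ) : AEStronglyMeasurable[⨅ n, F n] f μ := by
  have hmeas : Measurable[⨅ n, F n] fun ω => limsup (fun n => (hf n).mk f ω) atTop :=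
    measurable_iInf_limsup hF fun n => (hf n).stronglyMeasurable_mk.measurable
  refine ⟨_, hmeas.stronglyMeasurable, ?_⟩
  filter_upwards [ae_all_iff.2 fun n => (hf n).ae_eq_mk] with ω hω
  simp only [← hω, limsup_const]

lemma lpMeas_iInf (hF : Antitone F) (p : ℝ≥0∞) :
    lpMeas ℝ ℝ (⨅ n, F n) p μ = ⨅ n, lpMeas ℝ ℝ (F n) p μ := by
  ext f
  simp only [Submodule.mem_iInf, mem_lpMeas_iff_aestronglyMeasurable]
  exact ⟨fun hf n => hf.mono (iInf_le F n), aestronglyMeasurable_iInf hF⟩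

lemma tendsto_starProjection_iInf {𝕜 V ι : Type*} [RCLike 𝕜] [NormedAddCommGroup V]
    [InnerProductSpace 𝕜 V] [CompleteSpace V] [Preorder ι] {U : ι → Submodule 𝕜 V}
    [∀ i, (U i).HasOrthogonalProjection] [(⨅ i, U i).HasOrthogonalProjection]
    (hU : Antitone U) (x : V) :
    Tendsto (fun i => (U i).starProjection x) atTop (𝓝 ((⨅ i, U i).starProjection x)) := by
  have hclosure : (⨆ i, (U i)ᗮ).topologicalClosure = (⨅ i, U i)ᗮ := by
    rw [← Submodule.orthogonal_orthogonal_eq_closure, ← Submodule.iInf_orthogonal]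
    simp only [Submodule.orthogonal_orthogonal]
  have hlim := Submodule.starProjection_tendsto_closure_iSup (fun i => (U i)ᗮ)
    (fun _ _ hij => Submodule.orthogonal_le (hU hij)) x
  simp only [hclosure, Submodule.starProjection_orthogonal_val] at hlim
  simpa using hlim.const_sub x

lemma eLpNorm_one_condExp_sub_condExp_le {m₁ m₂ : MeasurableSpace Ω} {f g : Ω → ℝ}
    (hf : Integrable f μ) (hg : Integrable g μ) :
    eLpNorm (μ[f | m₁] - μ[f | m₂]) 1 μ ≤
      2 * eLpNorm (f - g) 1 μ + eLpNorm (μ[g | m₁] - μ[g | m₂]) 1 μ := by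
  have hdecomp : μ[f | m₁] - μ[f | m₂] =ᵐ[μ]
      (μ[f - g | m₁] - μ[f - g | m₂]) + (μ[g | m₁] - μ[g | m₂]) := by
    filter_upwards [condExp_sub hf hg m₁, condExp_sub hf hg m₂] with ω hω₁ hω₂
    simp only [Pi.add_apply, Pi.sub_apply, hω₁, hω₂]
    ring
  have hmeas (m : MeasurableSpace Ω) (h : Ω → ℝ) : AEStronglyMeasurable[m0] (μ[h | m]) μ :=
    integrable_condExp.aestronglyMeasurable
  rw [eLpNorm_congr_ae hdecomp]
  calc eLpNorm ((μ[f - g | m₁] - μ[f - g | m₂]) + (μ[g | m₁] - μ[g | m₂])) 1 μ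
      ≤ eLpNorm (μ[f - g | m₁]) 1 μ + eLpNorm (μ[f - g | m₂]) 1 μ +
          eLpNorm (μ[g | m₁] - μ[g | m₂]) 1 μ := by
        grw [eLpNorm_add_le ((hmeas m₁ _).sub (hmeas m₂ _)) ((hmeas m₁ _).sub (hmeas m₂ _)) le_rfl,
          eLpNorm_sub_le (hmeas m₁ _) (hmeas m₂ _) le_rfl]
    _ ≤ eLpNorm (f - g) 1 μ + eLpNorm (f - g) 1 μ + eLpNorm (μ[g | m₁] - μ[g | m₂]) 1 μ := by
        gcongr <;> exact eLpNorm_condExp_le_eLpNorm _ le_rfl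
    _ = 2 * eLpNorm (f - g) 1 μ + eLpNorm (μ[g | m₁] - μ[g | m₂]) 1 μ := by rw [two_mul]

variable [IsFiniteMeasure μ]

lemma tendsto_eLpNorm_two_condExp_iInf (hF : Antitone F) (hle : ∀ n, F n ≤ m0) {f : Ω → ℝ}
    (hf : MemLp f 2 μ) :
    Tendsto (fun n => eLpNorm (μ[f | F n] - μ[f | ⨅ n, F n]) 2 μ) atTop (𝓝 0) := by
  have hle_iInf : ⨅ n, F n ≤ m0 := (iInf_le F 0).trans (hle 0)
  have : ∀ n, Fact (F n ≤ m0) := fun n => ⟨hle n⟩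
  have : Fact (⨅ n, F n ≤ m0) := ⟨hle_iInf⟩
  have : (⨅ n, lpMeas ℝ ℝ (F n) 2 μ).HasOrthogonalProjection := by
    rw [← lpMeas_iInf hF]; infer_instance
  have hlim := tendsto_starProjection_iInf (U := fun n => lpMeas ℝ ℝ (F n) 2 μ)
    (fun _ _ hij _ hg => hg.mono (hF hij)) hf.toLp
  simp only [← lpMeas_iInf hF] at hlim
  rw [Lp.tendsto_Lp_iff_tendsto_eLpNorm'] at hlim
  refine hlim.congr fun n => eLpNorm_congr_ae ?_
  exact (hf.condExpL2_ae_eq_condExp (𝕜 := ℝ) (hle n)).sub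
    (hf.condExpL2_ae_eq_condExp (𝕜 := ℝ) hle_iInf)

lemma tendsto_eLpNorm_zero_of_exponent_le {V ι : Type*} [NormedAddCommGroup V] {l : Filter ι}
    {X : ι → Ω → V} {p q : ℝ≥0∞} (hp : p ≠ 0) (hpq : p ≤ q)
    (hX : ∀ i, AEStronglyMeasurable (X i) μ) (hlim : Tendsto (fun i => eLpNorm (X i) q μ) l (𝓝 0)) :
    Tendsto (fun i => eLpNorm (X i) p μ) l (𝓝 0) := by
  have hexp : 0 ≤ 1 / p.toReal - 1 / q.toReal := by
    rcases eq_or_ne q ∞ with rfl | hq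
    · simp
    · exact sub_nonneg.2 (one_div_le_one_div_of_le
        (ENNReal.toReal_pos hp (ne_top_of_le_ne_top hq hpq)) (ENNReal.toReal_mono hq hpq))
  refine tendsto_of_tendsto_of_tendsto_of_le_of_le tendsto_const_nhds ?_ (fun _ => zero_le)
    fun i => eLpNorm_le_eLpNorm_mul_rpow_measure_univ hpq (hX i)
  simpa only [zero_mul] using ENNReal.Tendsto.mul_const hlim
    (Or.inr (ENNReal.rpow_ne_top_of_nonneg hexp (measure_ne_top μ _)))

lemma tendsto_eLpNorm_one_condExp_iInf (hF : Antitone F) (hle : ∀ n, F n ≤ m0) {f : Ω → ℝ}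
    (hf : Integrable f μ) :
    Tendsto (fun n => eLpNorm (μ[f | F n] - μ[f | ⨅ n, F n]) 1 μ) atTop (𝓝 0) := by
  rw [ENNReal.tendsto_nhds_zero]
  intro ε hε
  have hδ : ε / 2 / 2 ≠ 0 := by simp [hε.ne']
  obtain ⟨g, hfg, hg⟩ :=
    (memLp_one_iff_integrable.2 hf).exists_simpleFunc_eLpNorm_sub_lt ENNReal.one_ne_top hδ
  have hlim := tendsto_eLpNorm_zero_of_exponent_le one_ne_zero one_le_two
    (fun n => (integrable_condExp.sub integrable_condExp).aestronglyMeasurable)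
    (tendsto_eLpNorm_two_condExp_iInf hF hle (g.memLp_of_isFiniteMeasure 2 μ))
  filter_upwards [ENNReal.tendsto_nhds_zero.1 hlim (ε / 2) (ENNReal.half_pos hε.ne')] with n hn
  calc eLpNorm (μ[f | F n] - μ[f | ⨅ n, F n]) 1 μ
      ≤ 2 * eLpNorm (f - ⇑g) 1 μ + eLpNorm (μ[g | F n] - μ[g | ⨅ n, F n]) 1 μ :=
        eLpNorm_one_condExp_sub_condExp_le hf (memLp_one_iff_integrable.1 hg)
    _ ≤ 2 * (ε / 2 / 2) + ε / 2 := by gcongr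
    _ = ε := by rw [ENNReal.mul_div_cancel two_ne_zero ENNReal.ofNat_ne_top, ENNReal.add_halves]

lemma mul_measure_exists_le_abs_condExp_le_of_le (hF : Antitone F) (hle : ∀ n, F n ≤ m0)
    (g : Ω → ℝ) (ε : ℝ≥0) (N : ℕ) :
    ε * μ {ω | ∃ k ≤ N, ε ≤ |μ[g | F k] ω|} ≤ eLpNorm g 1 μ := by
  let 𝒢 : Filtration ℕ m0 :=
    ⟨fun k => F (N - k), fun _ _ hij => hF (Nat.sub_le_sub_left hij N), fun _ => hle _⟩
  have hmart := martingale_condExp g 𝒢 μ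
  have hsub : Submartingale (fun k ω => |μ[g | F (N - k)] ω|) 𝒢 μ :=
    hmart.submartingale.sup hmart.neg.submartingale
  refine le_trans ?_ ((maximal_ineq hsub (fun _ _ => abs_nonneg _) (ε := ε) N).trans ?_)
  · refine mul_le_mul_right (measure_mono ?_) _
    rintro ω ⟨k, hkN, hk⟩
    refine hk.trans ((Finset.le_sup'_iff _).2 ⟨N - k, ?_, ?_⟩)
    · exact Finset.mem_range_succ_iff.2 (Nat.sub_le N k)
    · rw [Nat.sub_sub_self hkN]
  · rw [Nat.sub_self]
    refine le_trans (ENNReal.ofReal_le_ofReal (setIntegral_le_integral integrable_condExp.abs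
      (Eventually.of_forall fun ω => abs_nonneg _))) ?_
    refine le_trans (le_of_eq ?_) (eLpNorm_condExp_le_eLpNorm (m := F 0) g le_rfl)
    simp_rw [eLpNorm_one_eq_lintegral_enorm, ← Real.norm_eq_abs]
    exact ofReal_integral_norm_eq_lintegral_enorm integrable_condExp

lemma mul_measure_exists_le_abs_condExp_le (hF : Antitone F) (hle : ∀ n, F n ≤ m0)
    (g : Ω → ℝ) (ε : ℝ≥0) :
    ε * μ {ω | ∃ k, ε ≤ |μ[g | F k] ω|} ≤ eLpNorm g 1 μ := by
  have hmono : Monotone fun N : ℕ => {ω | ∃ k ≤ N, ε ≤ |μ[g | F k] ω|} :=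
    fun _ _ hNM _ ⟨k, hkN, hk⟩ => ⟨k, hkN.trans hNM, hk⟩
  have hunion : {ω | ∃ k, ε ≤ |μ[g | F k] ω|} = ⋃ N, {ω | ∃ k ≤ N, ε ≤ |μ[g | F k] ω|} := by
    ext ω
    simp only [Set.mem_iUnion, Set.mem_ofPred_eq]
    exact ⟨fun ⟨k, hk⟩ => ⟨k, k, le_rfl, hk⟩, fun ⟨_, k, _, hk⟩ => ⟨k, hk⟩⟩
  rw [hunion, hmono.measure_iUnion, ENNReal.mul_iSup]
  exact iSup_le fun N => mul_measure_exists_le_abs_condExp_le_of_le hF hle g ε N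

/- Conditioning `h = E[f|F n] - E[f|⨅ F]` on `F k` for `k ≥ n` gives `E[f|F k] - E[f|⨅ F]`, so the
maximal inequality applies to the tail of the sequence with the single function `h`. -/
lemma mul_measure_exists_le_abs_condExp_sub_le (hF : Antitone F) (hle : ∀ n, F n ≤ m0)
    (f : Ω → ℝ) (ε : ℝ≥0) (n : ℕ) :
    ε * μ {ω | ∃ k, ε ≤ |μ[f | F (k + n)] ω - μ[f | ⨅ n, F n] ω|} ≤
      eLpNorm (μ[f | F n] - μ[f | ⨅ n, F n]) 1 μ := by
  have hcond : ∀ᵐ ω ∂μ, ∀ k, μ[μ[f | F n] - μ[f | ⨅ n, F n] | F (k + n)] ω =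
      μ[f | F (k + n)] ω - μ[f | ⨅ n, F n] ω := by
    refine ae_all_iff.2 fun k => ?_
    have htower := condExp_condExp_of_le (f := f) (μ := μ) (hF (Nat.le_add_left n k)) (hle n)
    have hinv : μ[μ[f | ⨅ n, F n] | F (k + n)] = μ[f | ⨅ n, F n] :=
      condExp_of_stronglyMeasurable (hle _) (stronglyMeasurable_condExp.mono (iInf_le F _))
        integrable_condExp
    filter_upwards [condExp_sub (f := μ[f | F n]) (g := μ[f | ⨅ n, F n]) integrable_condExp
      integrable_condExp (F (k + n)), htower] with ω hsub hω
    rw [hsub, Pi.sub_apply, hω, hinv]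
  have hset : μ {ω | ∃ k, ε ≤ |μ[f | F (k + n)] ω - μ[f | ⨅ n, F n] ω|} =
      μ {ω | ∃ k, ε ≤ |μ[μ[f | F n] - μ[f | ⨅ n, F n] | F (k + n)] ω|} := by
    refine measure_congr (eventuallyEq_set.2 ?_)
    filter_upwards [hcond] with ω hω
    simp only [hω]
  rw [hset]
  exact mul_measure_exists_le_abs_condExp_le (F := fun k => F (k + n))
    (fun _ _ hij => hF (by gcongr)) (fun k => hle _) _ ε

lemma ae_eventually_abs_condExp_sub_condExp_iInf_lt (hF : Antitone F) (hle : ∀ n, F n ≤ m0)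
    {f : Ω → ℝ} (hf : Integrable f μ) {ε : ℝ≥0} (hε : ε ≠ 0) :
    ∀ᵐ ω ∂μ, ∀ᶠ n in atTop, |μ[f | F n] ω - μ[f | ⨅ n, F n] ω| < ε := by
  have hsubset (n : ℕ) : {ω | ¬ ∀ᶠ k in atTop, |μ[f | F k] ω - μ[f | ⨅ n, F n] ω| < ε} ⊆
      {ω | ∃ k, ε ≤ |μ[f | F (k + n)] ω - μ[f | ⨅ n, F n] ω|} := by
    refine fun ω hω => by_contra fun hn => hω ?_
    simp only [Set.mem_ofPred_eq, not_exists, not_le] at hn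
    exact eventually_atTop.2 ⟨n, fun m hm => by simpa [Nat.sub_add_cancel hm] using hn (m - n)⟩
  have hle_norm (n : ℕ) := (mul_le_mul_right (measure_mono (hsubset n)) ε).trans
    (mul_measure_exists_le_abs_condExp_sub_le (μ := μ) hF hle f ε n)
  have hzero := ge_of_tendsto' (tendsto_eLpNorm_one_condExp_iInf hF hle hf) hle_norm
  simpa [ae_iff, hε] using hzero

/-- **Lévy's downward theorem**. -/
theorem ae_tendsto_condExp_iInf (hF : Antitone F) (hle : ∀ n, F n ≤ m0) {f : Ω → ℝ}
    (hf : Integrable f μ) :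
    ∀ᵐ ω ∂μ, Tendsto (fun n => μ[f | F n] ω) atTop (𝓝 (μ[f | ⨅ n, F n] ω)) := by
  have hall := ae_all_iff.2 fun i : ℕ =>
    ae_eventually_abs_condExp_sub_condExp_iInf_lt hF hle hf (ε := 1 / (i + 1)) (by positivity)
  filter_upwards [hall] with ω hω
  refine Metric.nhds_basis_ball_inv_nat_succ.tendsto_right_iff.2 fun i _ => ?_
  simpa [Real.dist_eq] using hω i

end LevyDownward

section Cylinder

variable [MeasurableSpace E]

lemma cylSigma_eq_comap_domRestrict (Δ : Set S) :
    cylSigma S E Δ = MeasurableSpace.comap Δ.domRestrict MeasurableSpace.pi := by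
  simp only [cylSigma, MeasurableSpace.pi, MeasurableSpace.comap_iSup, MeasurableSpace.comap_comp,
    iSup_subtype']
  rfl

lemma cylSigma_le (Δ : Set S) : cylSigma S E Δ ≤ MeasurableSpace.pi :=
  iSup₂_le fun i _ => (measurable_pi_apply i).comap_le

lemma cylSigma_compl_anti :
    Antitone fun Λ : Finset S => cylSigma S E ((↑Λ : Set S)ᶜ) := fun _ _ h =>
  biSup_mono fun _ hi => Set.compl_subset_compl.2 (Finset.coe_subset.2 h) hi

lemma tailSigma_le_cylSigma (Λ : Finset S) : tailSigma S E ≤ cylSigma S E ((↑Λ : Set S)ᶜ) :=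
  iInf_le _ Λ

lemma tailSigma_le : tailSigma S E ≤ MeasurableSpace.pi :=
  (tailSigma_le_cylSigma ∅).trans (cylSigma_le _)

lemma iInf_cylSigma_compl_eq_tailSigma {L : ℕ → Finset S} (hL : Tendsto L atTop atTop) :
    ⨅ n, cylSigma S E ((↑(L n) : Set S)ᶜ) = tailSigma S E :=
  cylSigma_compl_anti.iInf_comp_tendsto_atTop hL

lemma dependsOn_of_measurable_cylSigma {Z : Type*} [MeasurableSpace Z] [MeasurableSingletonClass Z]
    {Δ : Set S} {f : (S → E) → Z} (hf : Measurable[cylSigma S E Δ] f) : DependsOn f Δ := by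
  rw [cylSigma_eq_comap_domRestrict] at hf
  exact dependsOn_iff_factorsThrough.2 hf.factorsThrough

open Classical in
lemma measurable_piecewise_cylSigma (Δ : Set S) (c : S → E) :
    Measurable[cylSigma S E Δ] fun ω : S → E => Δ.piecewise ω c := by
  refine @measurable_pi_lambda _ _ _ (cylSigma S E Δ) _ _ fun i => ?_
  by_cases hi : i ∈ Δ
  · simp only [Set.piecewise_eq_of_mem _ _ _ hi]
    exact Measurable.of_comap_le (le_iSup₂_of_le i hi le_rfl)
  · simp only [Set.piecewise_eq_of_notMem _ _ _ hi, measurable_const]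

lemma measurable_prod_cylSigma_of_section {Z : Type*} [MeasurableSpace Z]
    [MeasurableSingletonClass Z] [mH : MeasurableSpace H] {Δ : Set S} {f : H × (S → E) → Z}
    (hf : Measurable f) (hsec : ∀ ξ, Measurable[cylSigma S E Δ] fun ω => f (ξ, ω)) :
    Measurable[mH.prod (cylSigma S E Δ)] f := by
  classical
  rcases isEmpty_or_nonempty (S → E) with _ | ⟨⟨c⟩⟩
  · exact @measurable_of_empty _ _ (_) _ _ _
  have hfactor : f = f ∘ Prod.map id fun ω => Δ.piecewise ω c := by
    ext ⟨ξ, ω⟩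
    exact dependsOn_of_measurable_cylSigma (hsec ξ)
      fun i hi => (Set.piecewise_eq_of_mem _ _ _ hi).symm
  rw [hfactor]
  exact hf.comp (measurable_id.prodMap (measurable_piecewise_cylSigma Δ c))

end Cylinder

section JointTail

variable [MeasurableSpace E] [mH : MeasurableSpace H]

/-- The σ-algebra `⋂_{Λ finite} (ℋ ⊗ ℱ_{Λᶜ})` on `H × E^S`. It contains `ℋ ⊗ 𝒯` and may be
strictly larger. -/
abbrev jointTailSigma (S E H : Type*) [MeasurableSpace E] [mH : MeasurableSpace H] :
    MeasurableSpace (H × (S → E)) :=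
  ⨅ Λ : Finset S, mH.prod (cylSigma S E ((↑Λ : Set S)ᶜ))

lemma prod_cylSigma_compl_anti :
    Antitone fun Λ : Finset S => mH.prod (cylSigma S E ((↑Λ : Set S)ᶜ)) := fun _ _ h =>
  sup_le_sup le_rfl (MeasurableSpace.comap_mono (cylSigma_compl_anti h))

lemma measurable_prodMk_tailSigma (ξ : H) :
    Measurable[tailSigma S E, jointTailSigma S E H] (Prod.mk ξ) := by
  refine fun B hB => MeasurableSpace.measurableSet_iInf.2 fun Λ => ?_
  exact @measurable_prodMk_left _ _ mH (cylSigma S E ((↑Λ : Set S)ᶜ)) ξ B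
    (MeasurableSpace.measurableSet_iInf.1 hB Λ)

lemma measurable_jointTailSigma_limsup {γ : H → Finset S → (S → E) → Measure (S → E)}
    (hγ : IsRandomSpecification γ) {L : ℕ → Finset S} (hLmono : Monotone L)
    (hL : Tendsto L atTop atTop) {A : Set (S → E)} (hA : MeasurableSet A) :
    Measurable[jointTailSigma S E H]
      fun p : H × (S → E) => limsup (fun n => γ p.1 (L n) p.2 A) atTop := by
  rw [jointTailSigma, ← prod_cylSigma_compl_anti.iInf_comp_tendsto_atTop hL]
  exact measurable_iInf_limsup (prod_cylSigma_compl_anti.comp_monotone hLmono) fun n =>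
    measurable_prod_cylSigma_of_section (hγ.jointMeas (L n) A hA)
      fun ξ => (hγ.spec ξ).meas (L n) A hA

end JointTail

section RatCDF

open ProbabilityTheory

lemma isRatStieltjesPoint_cdf (ν : Measure ℝ) :
    IsRatStieltjesPoint id fun q : ℚ => cdf ν q where
  mono _ _ hqr := monotone_cdf ν (Rat.cast_le.2 hqr)
  tendsto_atTop_one := (tendsto_cdf_atTop ν).comp (tendsto_ratCast_atTop_iff.2 tendsto_id)
  tendsto_atBot_zero := (tendsto_cdf_atBot ν).comp (tendsto_ratCast_atBot_iff.2 tendsto_id)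
  iInf_rat_gt_eq t := by
    dsimp only [id]
    rw [← StieltjesFunction.iInf_rat_gt_eq (cdf ν) t]
    exact Equiv.iInf_congr (Equiv.subtypeEquivRight fun r => by simp) fun r => rfl

lemma measure_stieltjesOfMeasurableRat_cdf (ν : Measure ℝ) [IsProbabilityMeasure ν] :
    (stieltjesOfMeasurableRat id measurable_id fun q : ℚ => cdf ν q).measure = ν := by
  have : IsProbabilityMeasure
      (stieltjesOfMeasurableRat id measurable_id fun q : ℚ => cdf ν q).measure :=
    ⟨measure_stieltjesOfMeasurableRat_univ measurable_id _⟩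
  refine ext_of_generate_finite _
    (BorelSpace.measurable_eq.trans Real.borel_eq_generateFrom_Iic_rat) Real.isPiSystem_Iic_rat
    (fun s hs => ?_) (by simp only [measure_univ])
  obtain ⟨q, rfl⟩ := Set.mem_iUnion.1 hs
  rw [measure_stieltjesOfMeasurableRat_Iic, stieltjesOfMeasurableRat_eq,
    toRatCDF_of_isRatStieltjesPoint (isRatStieltjesPoint_cdf ν), id, ofReal_cdf]

variable {Ω : Type*} [MeasurableSpace Ω] [StandardBorelSpace Ω]

/-- The distribution function, sampled at the rationals, of the image of a measure on a standard
Borel space under the measurable embedding `embeddingReal` into `ℝ`. It encodes a probability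
measure by countably many reals. -/
noncomputable def ratCDF (ν : Measure Ω) (q : ℚ) : ℝ :=
  ν.real (embeddingReal Ω ⁻¹' Set.Iic (q : ℝ))

lemma measurableSet_embeddingReal_preimage_Iic (q : ℚ) :
    MeasurableSet (embeddingReal Ω ⁻¹' Set.Iic (q : ℝ)) :=
  measurable_embeddingReal Ω measurableSet_Iic

lemma measurable_ratCDF : Measurable (ratCDF : Measure Ω → ℚ → ℝ) :=
  measurable_pi_lambda _ fun q =>
    (Measure.measurable_coe (measurableSet_embeddingReal_preimage_Iic q)).ennreal_toReal

lemma ratCDF_eq_cdf_map (ν : Measure Ω) [IsProbabilityMeasure ν] :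
    ratCDF ν = fun q : ℚ => cdf (ν.map (embeddingReal Ω)) q := by
  have : IsProbabilityMeasure (ν.map (embeddingReal Ω)) :=
    Measure.isProbabilityMeasure_map (measurable_embeddingReal Ω).aemeasurable
  ext q
  rw [cdf_eq_real, map_measureReal_apply (measurable_embeddingReal Ω) measurableSet_Iic, ratCDF]

open Classical in
/-- A measurable left inverse of `ratCDF` on probability measures. Its value is a probability
measure for every argument: a function which is not the rational distribution function of a
probability measure carried by the range of `embeddingReal` is sent to a Dirac mass. -/
noncomputable def ofRatCDF [Nonempty Ω] (f : ℚ → ℝ) : Measure Ω :=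
  let η := (stieltjesOfMeasurableRat id measurable_id f).measure
  if η (Set.range (embeddingReal Ω)) = 1 then η.comap (embeddingReal Ω)
  else Measure.dirac (Classical.arbitrary Ω)

lemma measurable_ofRatCDF [Nonempty Ω] : Measurable (ofRatCDF : (ℚ → ℝ) → Measure Ω) := by
  have he := measurableEmbedding_embeddingReal Ω
  have hη := measurable_measure_stieltjesOfMeasurableRat (measurable_id (α := ℚ → ℝ))
  refine Measurable.ite ?_ ?_ measurable_const
  · exact (Measure.measurable_coe he.measurableSet_range).comp hη (measurableSet_singleton 1)
  · refine Measure.measurable_of_measurable_coe _ fun s hs => ?_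
    simp only [he.comap_apply]
    exact (Measure.measurable_coe (he.measurableSet_image.2 hs)).comp hη

instance isProbabilityMeasure_ofRatCDF [Nonempty Ω] (f : ℚ → ℝ) :
    IsProbabilityMeasure (ofRatCDF f : Measure Ω) := by
  unfold ofRatCDF
  extract_lets η
  split_ifs with hrange
  · exact ⟨by rw [(measurableEmbedding_embeddingReal Ω).comap_apply, Set.image_univ, hrange]⟩
  · infer_instance

lemma ofRatCDF_ratCDF [Nonempty Ω] (ν : Measure Ω) [IsProbabilityMeasure ν] :
    ofRatCDF (ratCDF ν) = ν := by
  have he := measurableEmbedding_embeddingReal Ω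
  have : IsProbabilityMeasure (ν.map (embeddingReal Ω)) :=
    Measure.isProbabilityMeasure_map he.measurable.aemeasurable
  have hrange : ν.map (embeddingReal Ω) (Set.range (embeddingReal Ω)) = 1 := by
    rw [he.map_apply, Set.preimage_range, measure_univ]
  simp only [ofRatCDF, ratCDF_eq_cdf_map, measure_stieltjesOfMeasurableRat_cdf, if_pos hrange,
    he.comap_map]

lemma ratCDF_inj {μ ν : Measure Ω} [IsProbabilityMeasure μ] [IsProbabilityMeasure ν] :
    ratCDF μ = ratCDF ν ↔ μ = ν := by
  refine ⟨fun h => ?_, congrArg ratCDF⟩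
  have := nonempty_of_isProbabilityMeasure μ
  rw [← ofRatCDF_ratCDF μ, h, ofRatCDF_ratCDF]

lemma measurableSet_eq_of_isProbabilityMeasure {α : Type*} [MeasurableSpace α]
    {κ η : α → Measure Ω} [∀ a, IsProbabilityMeasure (κ a)] [∀ a, IsProbabilityMeasure (η a)]
    (hκ : Measurable κ) (hη : Measurable η) : MeasurableSet {a | κ a = η a} := by
  simp only [← ratCDF_inj]
  exact measurableSet_eq_fun (measurable_ratCDF.comp hκ) (measurable_ratCDF.comp hη)

end RatCDF

section CondExpKernel

open ProbabilityTheory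

variable {Ω : Type*} {m : MeasurableSpace Ω} [mΩ : MeasurableSpace Ω] {μ : Measure Ω}
  [IsFiniteMeasure μ]

lemma toReal_ae_eq_condExp_indicator (hm : m ≤ mΩ) {g : Ω → ℝ≥0∞} (hg : Measurable[m] g)
    {A : Set Ω} (hA : MeasurableSet A)
    (hint : ∀ B, MeasurableSet[m] B → ∫⁻ ω in B, g ω ∂μ = μ (A ∩ B)) :
    (fun ω => (g ω).toReal) =ᵐ[μ] μ⟦A | m⟧ := by
  have hgΩ : Measurable g := hg.mono hm le_rfl
  have hfin : ∫⁻ ω, g ω ∂μ ≠ ∞ := by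
    rw [← setLIntegral_univ, hint _ MeasurableSet.univ]
    exact measure_ne_top μ _
  refine ae_eq_condExp_of_forall_setIntegral_eq hm ((integrable_const (1 : ℝ)).indicator hA)
    (fun _ _ _ => (integrable_toReal_of_lintegral_ne_top hgΩ.aemeasurable hfin).integrableOn)
    (fun B hB _ => ?_) hg.ennreal_toReal.stronglyMeasurable.aestronglyMeasurable
  rw [integral_toReal hgΩ.aemeasurable (ae_restrict_of_ae (ae_lt_top hgΩ hfin)), hint B hB,
    integral_indicator_const _ hA, measureReal_restrict_apply hA, smul_eq_mul, mul_one,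
    measureReal_def]

variable [StandardBorelSpace Ω]

lemma setLIntegral_condExpKernel (hm : m ≤ mΩ) {A B : Set Ω} (hA : MeasurableSet A)
    (hB : MeasurableSet[m] B) : ∫⁻ ω in B, condExpKernel μ m ω A ∂μ = μ (A ∩ B) := by
  rw [← lintegral_trim hm (measurable_condExpKernel hA), ← restrict_trim hm _ hB,
    ← Measure.compProd_apply_prod hB hA, compProd_trim_condExpKernel hm, Set.inter_comm]
  exact Measure.map_apply ((measurable_id'' hm).prodMk measurable_id) (hB.prod hA)

lemma ae_forall_ratCDF_condExpKernel_eq (hm : m ≤ mΩ) :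
    ∀ᵐ ω ∂μ, ∀ q : ℚ, ratCDF (condExpKernel μ m ω) q =
      (μ⟦embeddingReal Ω ⁻¹' Set.Iic (q : ℝ) | m⟧) ω :=
  ae_all_iff.2 fun q =>
    condExpKernel_ae_eq_condExp hm (measurableSet_embeddingReal_preimage_Iic q)

lemma ae_eq_condExpKernel_of_forall_condExp (hm : m ≤ mΩ) {κ : Ω → Measure Ω}
    [∀ ω, IsProbabilityMeasure (κ ω)]
    (hκ : ∀ A, MeasurableSet A → (fun ω => (κ ω).real A) =ᵐ[μ] μ⟦A | m⟧) :
    ∀ᵐ ω ∂μ, κ ω = condExpKernel μ m ω := by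
  filter_upwards [ae_forall_ratCDF_condExpKernel_eq hm,
    ae_all_iff.2 fun q : ℚ => hκ _ (measurableSet_embeddingReal_preimage_Iic q)] with ω hω hκω
  exact ratCDF_inj.1 (funext fun q => (hκω q).trans (hω q).symm)

end CondExpKernel

lemma toReal_limsup_eq_of_tendsto_toReal {ι : Type*} {l : Filter ι} [l.NeBot]
    {u : ι → ℝ≥0∞} {x : ℝ} (hu : ∀ i, u i ≠ ∞) (h : Tendsto (fun i => (u i).toReal) l (𝓝 x)) :
    (limsup u l).toReal = x := by
  have hofReal : Tendsto u l (𝓝 (ENNReal.ofReal x)) := by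
    simpa only [ENNReal.ofReal_toReal (hu _)] using ENNReal.tendsto_ofReal h
  rw [hofReal.limsup_eq, ENNReal.toReal_ofReal (ge_of_tendsto' h fun _ => ENNReal.toReal_nonneg)]

section Gibbs

open ProbabilityTheory

variable [MeasurableSpace E] {γ : Finset S → (S → E) → Measure (S → E)} {μ : Measure (S → E)}
  {A B : Set (S → E)} {L : ℕ → Finset S}

lemma IsSpecification.measurable (hγ : IsSpecification γ) (Λ : Finset S) : Measurable (γ Λ) :=
  Measure.measurable_of_measurable_coe _ fun A hA => (hγ.meas Λ A hA).mono (cylSigma_le _) le_rfl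

lemma IsSpecification.apply_inter (hγ : IsSpecification γ) (Λ : Finset S)
    (hB : MeasurableSet[cylSigma S E ((↑Λ : Set S)ᶜ)] B) (ω : S → E) :
    γ Λ ω (A ∩ B) = B.indicator (fun ω => γ Λ ω A) ω := by
  have := hγ.prob Λ ω
  have hprop := hγ.proper Λ B hB ω
  by_cases hω : ω ∈ B
  · rw [Set.indicator_of_mem hω] at hprop ⊢
    rw [Set.inter_comm]
    exact Measure.measure_inter_eq_of_ae ((prob_compl_eq_zero_iff (cylSigma_le _ _ hB)).2 hprop)
  · rw [Set.indicator_of_notMem hω] at hprop ⊢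
    exact measure_mono_null Set.inter_subset_right hprop

lemma IsSpecification.mem_gibbs_iff (hγ : IsSpecification γ) :
    μ ∈ Gibbs γ ↔ IsProbabilityMeasure μ ∧ ∀ Λ, μ.bind (γ Λ) = μ := by
  refine and_congr_right fun _ => forall_congr' fun Λ => ?_
  rw [Measure.ext_iff]
  refine forall₂_congr fun A hA => ?_
  rw [Measure.bind_apply hA (hγ.measurable Λ).aemeasurable]

lemma setLIntegral_of_mem_gibbs (hγ : IsSpecification γ) (hμ : μ ∈ Gibbs γ) (Λ : Finset S)
    (hA : MeasurableSet A) (hB : MeasurableSet[cylSigma S E ((↑Λ : Set S)ᶜ)] B) :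
    ∫⁻ ω in B, γ Λ ω A ∂μ = μ (A ∩ B) := by
  have hB' : MeasurableSet B := cylSigma_le _ _ hB
  rw [← hμ.2 Λ (A ∩ B) (hA.inter hB'), ← lintegral_indicator hB']
  exact lintegral_congr fun ω => (hγ.apply_inter Λ hB ω).symm

lemma real_ae_eq_condExp_of_mem_gibbs (hγ : IsSpecification γ) (hμ : μ ∈ Gibbs γ)
    (Λ : Finset S) (hA : MeasurableSet A) :
    (fun ω => (γ Λ ω).real A) =ᵐ[μ] μ⟦A | cylSigma S E ((↑Λ : Set S)ᶜ)⟧ := by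
  have := hμ.1
  exact toReal_ae_eq_condExp_indicator (cylSigma_le _) (hγ.meas Λ A hA) hA
    fun B hB => setLIntegral_of_mem_gibbs hγ hμ Λ hA hB

lemma ae_tendsto_real_condExp_tailSigma (hγ : IsSpecification γ) (hμ : μ ∈ Gibbs γ)
    (hLmono : Monotone L) (hL : Tendsto L atTop atTop) (hA : MeasurableSet A) :
    ∀ᵐ ω ∂μ, Tendsto (fun n => (γ (L n) ω).real A) atTop (𝓝 ((μ⟦A | tailSigma S E⟧) ω)) := by
  have := hμ.1
  have hlevy := ae_tendsto_condExp_iInf (cylSigma_compl_anti.comp_monotone hLmono)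
    (fun n => cylSigma_le ((↑(L n) : Set S)ᶜ))
    ((integrable_const (μ := μ) (1 : ℝ)).indicator hA)
  simp only [Function.comp_apply, iInf_cylSigma_compl_eq_tailSigma hL] at hlevy
  filter_upwards [hlevy,
    ae_all_iff.2 fun n => real_ae_eq_condExp_of_mem_gibbs hγ hμ (L n) hA] with ω hω hγω
  simpa only [hγω] using hω

variable [Countable S] [StandardBorelSpace E]

/-- The limit of the kernels `γ (L n)` along a sequence of volumes, taken through rational
distribution functions. The `limsup` and `ofRatCDF` make it a probability measure also at those
boundary conditions where the limit does not exist. -/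
noncomputable def limitKernel [Nonempty (S → E)] (γ : Finset S → (S → E) → Measure (S → E))
    (L : ℕ → Finset S) (ω : S → E) : Measure (S → E) :=
  ofRatCDF fun q =>
    (limsup (fun n => γ (L n) ω (embeddingReal (S → E) ⁻¹' Set.Iic (q : ℝ))) atTop).toReal

instance isProbabilityMeasure_limitKernel [Nonempty (S → E)] (ω : S → E) :
    IsProbabilityMeasure (limitKernel γ L ω) :=
  isProbabilityMeasure_ofRatCDF _

lemma limitKernel_ae_eq_condExpKernel [Nonempty (S → E)] (hγ : IsSpecification γ)
    (hμ : μ ∈ Gibbs γ) [IsFiniteMeasure μ] (hLmono : Monotone L) (hL : Tendsto L atTop atTop) :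
    limitKernel γ L =ᵐ[μ] condExpKernel μ (tailSigma S E) := by
  filter_upwards [ae_forall_ratCDF_condExpKernel_eq tailSigma_le, ae_all_iff.2 fun q : ℚ =>
    ae_tendsto_real_condExp_tailSigma hγ hμ hLmono hL
      (measurableSet_embeddingReal_preimage_Iic q)] with ω hκ hlim
  rw [limitKernel, ← ofRatCDF_ratCDF (condExpKernel μ (tailSigma S E) ω)]
  congr 1
  ext q
  have := fun n => hγ.prob (L n) ω
  rw [hκ, toReal_limsup_eq_of_tendsto_toReal (fun _ => measure_ne_top _ _) (hlim q)]

lemma ae_real_bind_condExpKernel_eq (hγ : IsSpecification γ) (hμ : μ ∈ Gibbs γ)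
    [IsFiniteMeasure μ] (Λ : Finset S) (hA : MeasurableSet A) :
    (fun ω => ((condExpKernel μ (tailSigma S E) ω).bind (γ Λ)).real A)
      =ᵐ[μ] μ⟦A | tailSigma S E⟧ := by
  have hmeas := (Measure.measurable_coe hA).comp (hγ.measurable Λ)
  have := fun ω => hγ.prob Λ ω
  have hbind (ω) : ((condExpKernel μ (tailSigma S E) ω).bind (γ Λ)).real A =
      ∫ σ, (γ Λ σ).real A ∂condExpKernel μ (tailSigma S E) ω := by
    rw [measureReal_def, Measure.bind_apply hA (hγ.measurable Λ).aemeasurable]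
    exact (integral_toReal hmeas.aemeasurable (ae_of_all _ fun σ => measure_lt_top _ _)).symm
  have hint : Integrable (fun σ => (γ Λ σ).real A) μ :=
    Integrable.of_bound hmeas.ennreal_toReal.aestronglyMeasurable 1
      (ae_of_all _ fun σ => by
        rw [Real.norm_of_nonneg measureReal_nonneg]; exact measureReal_le_one)
  calc (fun ω => ((condExpKernel μ (tailSigma S E) ω).bind (γ Λ)).real A)
      = fun ω => ∫ σ, (γ Λ σ).real A ∂condExpKernel μ (tailSigma S E) ω := funext hbind
    _ =ᵐ[μ] μ[fun σ => (γ Λ σ).real A | tailSigma S E] :=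
      (condExp_ae_eq_integral_condExpKernel tailSigma_le hint).symm
    _ =ᵐ[μ] μ[μ⟦A | cylSigma S E ((↑Λ : Set S)ᶜ)⟧ | tailSigma S E] :=
      condExp_congr_ae (real_ae_eq_condExp_of_mem_gibbs hγ hμ Λ hA)
    _ =ᵐ[μ] μ⟦A | tailSigma S E⟧ :=
      condExp_condExp_of_le (tailSigma_le_cylSigma Λ) (cylSigma_le _)

lemma ae_condExpKernel_mem_gibbs (hγ : IsSpecification γ) (hμ : μ ∈ Gibbs γ)
    [IsFiniteMeasure μ] : ∀ᵐ ω ∂μ, condExpKernel μ (tailSigma S E) ω ∈ Gibbs γ := by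
  have (Λ : Finset S) (ω : S → E) :
      IsProbabilityMeasure ((condExpKernel μ (tailSigma S E) ω).bind (γ Λ)) :=
    isProbabilityMeasure_bind (hγ.measurable Λ).aemeasurable (ae_of_all _ (hγ.prob Λ))
  filter_upwards [ae_all_iff.2 fun Λ => ae_eq_condExpKernel_of_forall_condExp tailSigma_le
    fun A hA => ae_real_bind_condExpKernel_eq hγ hμ Λ hA] with ω hω
  exact hγ.mem_gibbs_iff.2 ⟨inferInstance, hω⟩

lemma measurableSet_mem_gibbs {α : Type*} [MeasurableSpace α] {κ : α → Measure (S → E)}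
    [hprob : ∀ a, IsProbabilityMeasure (κ a)] (hγ : IsSpecification γ) (hκ : Measurable κ) :
    MeasurableSet {a | κ a ∈ Gibbs γ} := by
  simp only [hγ.mem_gibbs_iff, hprob, true_and, Set.ofPred_forall]
  refine MeasurableSet.iInter fun Λ => ?_
  have (a : α) : IsProbabilityMeasure ((κ a).bind (γ Λ)) :=
    isProbabilityMeasure_bind (hγ.measurable Λ).aemeasurable (ae_of_all _ (hγ.prob Λ))
  exact measurableSet_eq_of_isProbabilityMeasure
    ((Measure.measurable_bind' (hγ.measurable Λ)).comp hκ) hκ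

theorem isGTKernel_of_ae_eq_condExpKernel {π : (S → E) → Measure (S → E)}
    [∀ ω, IsProbabilityMeasure (π ω)] (hγ : IsSpecification γ)
    (hπ : Measurable[tailSigma S E] π)
    (hcond : ∀ μ ∈ Gibbs γ, ∀ [IsFiniteMeasure μ], π =ᵐ[μ] condExpKernel μ (tailSigma S E)) :
    IsGTKernel γ π where
  prob := inferInstance
  tailMeas A hA := (Measure.measurable_coe hA).comp hπ
  condProb μ hμ A hA B hB := by
    have := hμ.1
    rw [← setLIntegral_condExpKernel tailSigma_le hA hB]
    exact setLIntegral_congr_fun_ae (tailSigma_le _ hB)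
      ((hcond μ hμ).mono fun ω hω _ => by rw [hω])
  gibbsTailMeas := @measurableSet_mem_gibbs _ _ _ _ _ _ _ (tailSigma S E) _ _ hγ hπ
  gibbsFull μ hμ := by
    have := hμ.1
    have hae : ∀ᵐ ω ∂μ, π ω ∈ Gibbs γ := by
      filter_upwards [hcond μ hμ, ae_condExpKernel_mem_gibbs hγ hμ] with ω hω hgibbs
      exact hω ▸ hgibbs
    rw [measure_congr (eventuallyEq_univ.2 hae), measure_univ]

end Gibbs

section RandomKernel

variable [Countable S] [MeasurableSpace E] [StandardBorelSpace E] [MeasurableSpace H]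

lemma measurable_limitKernel [Nonempty (S → E)]
    {γ : H → Finset S → (S → E) → Measure (S → E)} (hγ : IsRandomSpecification γ)
    {L : ℕ → Finset S} (hLmono : Monotone L) (hL : Tendsto L atTop atTop) :
    Measurable[jointTailSigma S E H] fun p : H × (S → E) => limitKernel (γ p.1) L p.2 := by
  refine measurable_ofRatCDF.comp ?_
  exact @measurable_pi_lambda _ _ _ (jointTailSigma S E H) _ _ fun q =>
    (measurable_jointTailSigma_limsup hγ hLmono hL
      (measurableSet_embeddingReal_preimage_Iic q)).ennreal_toReal

theorem exists_random_GT_kernel_general {γ : H → Finset S → (S → E) → Measure (S → E)}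
    (hγ : IsRandomSpecification γ) :
    ∃ π : H → (S → E) → Measure (S → E),
      (∀ A : Set (S → E), MeasurableSet A →
        Measurable[jointTailSigma S E H] fun p : H × (S → E) => π p.1 p.2 A) ∧
      ∀ ξ, IsGTKernel (γ ξ) (π ξ) := by
  rcases isEmpty_or_nonempty (S → E) with hempty | hnonempty
  · exact ⟨fun _ => Measure.dirac, fun A _ => @measurable_of_empty _ _ (_) _ _ _, fun ξ =>
      isGTKernel_of_ae_eq_condExpKernel (hγ.spec ξ) (@measurable_of_empty _ _ (_) _ _ _)
        fun μ _ _ => ae_of_all _ isEmptyElim⟩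
  · obtain ⟨L, hLmono, hL⟩ := exists_seq_monotone_tendsto_atTop_atTop (Finset S)
    have hmeas := measurable_limitKernel hγ hLmono hL
    have htail (ξ) : Measurable[tailSigma S E] (limitKernel (γ ξ) L) :=
      fun B hB => measurable_prodMk_tailSigma ξ (hmeas hB)
    exact ⟨fun ξ => limitKernel (γ ξ) L, fun A hA => (Measure.measurable_coe hA).comp hmeas,
      fun ξ => isGTKernel_of_ae_eq_condExpKernel (hγ.spec ξ) (htail ξ)
        fun μ hμ _ => limitKernel_ae_eq_condExpKernel (hγ.spec ξ) hμ hLmono hL⟩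

end RandomKernel

/-- **Proposition (random `(𝒢(γ[ξ]), 𝒯)`-kernel).** For a random specification with
`𝒢(γ[ξ]) ≠ ∅` for `ℙ`-a.e. `ξ`, there is a kernel `π[ξ](·|ω)` which is
`⋂_Λ (ℋ ⊗ ℱ_{Λᶜ})`-measurable in `(ξ, ω)` at every fixed measurable set, and such that
for `ℙ`-a.e. `ξ`, `π[ξ]` is a `(𝒢(γ[ξ]), 𝒯)`-kernel. -/
theorem exists_random_GT_kernel
    [Countable S] [MeasurableSpace E] [StandardBorelSpace E] [MeasurableSpace H]
    (ℙ : Measure H) [IsProbabilityMeasure ℙ]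
    (γ : H → Finset S → (S → E) → Measure (S → E))
    (hγ : IsRandomSpecification γ)
    (hGnonempty : ∀ᵐ ξ ∂ℙ, (Gibbs (γ ξ)).Nonempty) :
    ∃ π : H → (S → E) → Measure (S → E),
      -- (1) measurability w.r.t. `⋂_Λ (ℋ ⊗ ℱ_{Λᶜ})`
      (∀ A : Set (S → E), MeasurableSet A →
        Measurable[⨅ Λ : Finset S,
            MeasurableSpace.prod (inferInstance : MeasurableSpace H)
              (cylSigma S E ((↑Λ : Set S)ᶜ))]
          fun p : H × (S → E) => π p.1 p.2 A) ∧
      -- (2) for `ℙ`-a.e. `ξ`: `π[ξ](·|ω)` is a probability measure for every `ω`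
      -- and `π[ξ]` is a `(𝒢(γ[ξ]), 𝒯)`-kernel
      (∀ᵐ ξ ∂ℙ, (∀ ω, IsProbabilityMeasure (π ξ ω)) ∧ IsGTKernel (γ ξ) (π ξ)) := by
  obtain ⟨π, hmeas, hπ⟩ := exists_random_GT_kernel_general hγ
  exact ⟨π, hmeas, Eventually.of_forall fun ξ => ⟨(hπ ξ).prob, hπ ξ⟩⟩

end GibbsMeta
end

section
/- Let (H,ℋ) and (Ω,ℱ) be measurable spaces and let π : H × Ω × ℱ → [0,1] be such that A ↦ π[ξ](A|ω) is a probability measure on (Ω,ℱ) for every (ξ,ω) ∈ H × Ω and (ξ,ω) ↦ π[ξ](A|ω) is (ℋ⊗ℱ)-measurable for every A ∈ ℱ. For ξ ∈ H and μ ∈ 𝒫(Ω), let w[ξ]_μ ∈ 𝒫(𝒫(Ω)) be the image (pushforward) of μ under ω ↦ π[ξ](·|ω), i.e. w[ξ]_μ(M) = μ({ω : π[ξ](·|ω) ∈ M}) for M ∈ e(𝒫(Ω)). Then the map (ξ,μ) ↦ w[ξ]_μ is measurable from (H × 𝒫(Ω), ℋ ⊗ e(𝒫(Ω))) to (𝒫(𝒫(Ω)),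 e(𝒫(𝒫(Ω)))). -/
open MeasureTheory Filter Topology
open scoped ENNReal NNReal

namespace GibbsMeta

/-- The evaluation σ-algebra on the space `𝒫(Ω)` of probability measures, induced by
the evaluation σ-algebra on `Measure Ω`. -/
instance {Ω : Type*} [MeasurableSpace Ω] : MeasurableSpace (ProbabilityMeasure Ω) :=
  inferInstanceAs (MeasurableSpace {μ : Measure Ω // IsProbabilityMeasure μ})

section

open ProbabilityTheory

variable {X H Ω E : Type*} [MeasurableSpace X] [MeasurableSpace H] [MeasurableSpace Ω]
  [MeasurableSpace E]

-- At a measurable set `M`, the pushforward is the `κ x`-measure of the section at `x` of the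
-- measurable set `{(x, ω) | f x ω ∈ M}`, so s-finiteness of `κ` gives measurability in `x`.
theorem measurable_map_kernel (κ : Kernel X Ω) [IsSFiniteKernel κ] {f : X → Ω → E}
    (hf : Measurable (Function.uncurry f)) : Measurable fun x => (κ x).map (f x) := by
  refine Measure.measurable_of_measurable_coe _ fun M hM => ?_
  simp_rw [Measure.map_apply hf.of_uncurry_left hM]
  exact Kernel.measurable_kernel_prodMk_left (hf hM)

variable (Ω) in
/-- The tautological Markov kernel from `𝒫(Ω)` to `Ω`, sending `μ` to itself. It presents a
variable probability measure as a kernel, so that results on kernels apply to it. -/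
def tautologicalKernel : Kernel (ProbabilityMeasure Ω) Ω where
  toFun μ := μ
  measurable' := measurable_subtype_coe

instance isMarkovKernel_tautologicalKernel : IsMarkovKernel (tautologicalKernel Ω) :=
  ⟨fun μ => inferInstanceAs (IsProbabilityMeasure (μ : Measure Ω))⟩

theorem measurable_decomposition_map_general {f : H → Ω → E}
    (hf : Measurable (Function.uncurry f)) (w : H → ProbabilityMeasure Ω → Measure E)
    (hw : ∀ ξ (μ : ProbabilityMeasure Ω), ∀ M : Set E, MeasurableSet M →
      w ξ μ M = (μ : Measure Ω) {ω | f ξ ω ∈ M}) :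
    Measurable fun p : H × ProbabilityMeasure Ω => w p.1 p.2 := by
  have w_eq_map (ξ : H) (μ : ProbabilityMeasure Ω) : w ξ μ = (μ : Measure Ω).map (f ξ) :=
    Measure.ext fun M hM =>
      (hw ξ μ M hM).trans (Measure.map_apply hf.of_uncurry_left hM).symm
  simp_rw [w_eq_map]
  exact measurable_map_kernel (Kernel.prodMkLeft H (tautologicalKernel Ω)) (f := fun p => f p.1)
    (hf.comp (measurable_fst.prodMap measurable_id))

end

/-- **Measurability of the decomposition map.** Let `π` be a probability kernel on
`H × Ω`, jointly measurable in `(ξ, ω)`, and let `w[ξ]_μ ∈ 𝒫(𝒫(Ω))` be the image of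
`μ` under `ω ↦ π[ξ](·|ω)`, i.e. `w[ξ]_μ(M) = μ({ω : π[ξ](·|ω) ∈ M})`. Then
`(ξ, μ) ↦ w[ξ]_μ` is `ℋ ⊗ e(𝒫(Ω)) – e(𝒫(𝒫(Ω)))` measurable. -/
theorem measurable_decomposition_map
    {H Ω : Type*} [MeasurableSpace H] [MeasurableSpace Ω]
    (π : H → Ω → Measure Ω)
    (hπprob : ∀ ξ ω, IsProbabilityMeasure (π ξ ω))
    (hπmeas : ∀ A : Set Ω, MeasurableSet A →
      Measurable fun p : H × Ω => π p.1 p.2 A)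
    (w : H → Measure Ω → Measure (Measure Ω))
    (hw : ∀ ξ (μ : Measure Ω), ∀ M : Set (Measure Ω), MeasurableSet M →
      w ξ μ M = μ {ω | π ξ ω ∈ M}) :
    Measurable fun p : H × ProbabilityMeasure Ω => w p.1 (p.2 : Measure Ω) :=
  measurable_decomposition_map_general (Measure.measurable_of_measurable_coe _ hπmeas)
    (fun ξ μ => w ξ μ) fun ξ μ => hw ξ μ

end GibbsMeta
end

section
/- Let E be a nonempty standard Borel space, d ≥ 1, and Ω = E^{ℤ^d} with the product σ-algebra ℱ. Then there exists a countable core 𝒞 of (Ω,ℱ) that is translation invariant, i.e. θ_jA ∈ 𝒞 for every A ∈ 𝒞 and every j ∈ ℤ^d. -/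
open MeasureTheory Filter Topology
open scoped ENNReal NNReal

namespace GibbsMeta

/-- The shift `θ_j` on configurations `ω ∈ E^{ℤᵈ}`: `(θ_jω)_i = ω_{i-j}`. -/
def shift {E : Type*} {d : ℕ} (j : Fin d → ℤ) (ω : (Fin d → ℤ) → E) : (Fin d → ℤ) → E :=
  fun i => ω (i - j)

/-- A countable core of a measurable space: a countable, intersection-stable generator
`𝒞` of the σ-algebra such that convergence of probability measures on all sets of `𝒞`
determines a unique limiting probability measure. -/
def IsCore {Ω' : Type*} [m : MeasurableSpace Ω'] (𝒞 : Set (Set Ω')) : Prop :=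
  𝒞.Countable ∧ (∀ A ∈ 𝒞, MeasurableSet A) ∧ (∀ A ∈ 𝒞, ∀ B ∈ 𝒞, A ∩ B ∈ 𝒞) ∧
  MeasurableSpace.generateFrom 𝒞 = m ∧
  ∀ μs : ℕ → Measure Ω', (∀ n, IsProbabilityMeasure (μs n)) →
    (∀ A ∈ 𝒞, ∃ L : ℝ≥0∞, Tendsto (fun n => μs n A) atTop (𝓝 L)) →
    ∃! μ : Measure Ω', IsProbabilityMeasure μ ∧
      ∀ A ∈ 𝒞, Tendsto (fun n => μs n A) atTop (𝓝 (μ A))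

/-!
Every standard Borel space is the Borel space of a second countable Stone topology: the discrete
one if it is finite, that of `ℕ∞` (the one-point compactification of `ℕ`) if it is countably
infinite, that of the Cantor space otherwise. The product topology on `E^ι`, with `ι` countable, is
then again second countable and Stone, so its clopen sets form a countable generating π-system. As
the probability measures on a compact space are weakly compact and clopen sets have empty
frontier, any weak cluster point of a sequence converging on the clopen sets is its limit there.
Permuting coordinates is a homeomorphism of `E^ι`, and hence preserves clopen sets.
-/

theorem IsCore.of_exists_limit {Ω : Type*} [m : MeasurableSpace Ω] {𝒞 : Set (Set Ω)}
    (hcount : 𝒞.Countable) (hinter : ∀ A ∈ 𝒞, ∀ B ∈ 𝒞, A ∩ B ∈ 𝒞)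
    (hgen : MeasurableSpace.generateFrom 𝒞 = m)
    (hlimit : ∀ μs : ℕ → Measure Ω, (∀ n, IsProbabilityMeasure (μs n)) →
      (∀ A ∈ 𝒞, ∃ L : ℝ≥0∞, Tendsto (fun n => μs n A) atTop (𝓝 L)) →
      ∃ μ : Measure Ω, IsProbabilityMeasure μ ∧
        ∀ A ∈ 𝒞, Tendsto (fun n => μs n A) atTop (𝓝 (μ A))) :
    IsCore 𝒞 := by
  refine ⟨hcount, fun A hA => hgen ▸ MeasurableSpace.measurableSet_generateFrom hA, hinter, hgen,
    fun μs hμs hconv => ?_⟩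
  obtain ⟨μ, hμ, hμlim⟩ := hlimit μs hμs hconv
  refine ⟨μ, ⟨hμ, hμlim⟩, fun ν ⟨_, hνlim⟩ => ?_⟩
  have hpi : IsPiSystem 𝒞 := fun A hA B hB _ => hinter A hA B hB
  have hagree : ∀ A ∈ 𝒞, ν A = μ A := fun A hA => tendsto_nhds_unique (hνlim A hA) (hμlim A hA)
  exact ext_of_generate_finite 𝒞 hgen.symm hpi hagree (by simp)

theorem measure_eq_of_mapClusterPt_of_isClopen {X ι : Type*} [TopologicalSpace X]
    [MeasurableSpace X] [OpensMeasurableSpace X] [HasOuterApproxClosed X] {l : Filter ι}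
    {μs : ι → ProbabilityMeasure X} {μ : ProbabilityMeasure X} (hμ : MapClusterPt μ l μs)
    {A : Set X} (hA : IsClopen A) {L : ℝ≥0∞}
    (hL : Tendsto (fun i => (μs i : Measure X) A) l (𝓝 L)) : (μ : Measure X) A = L := by
  obtain ⟨U, hUl, hU⟩ := mapClusterPt_iff_ultrafilter.mp hμ
  have hnull : (μ : Measure X) (frontier A) = 0 := by rw [hA.frontier_eq, measure_empty]
  exact tendsto_nhds_unique
    (ProbabilityMeasure.tendsto_measure_of_null_frontier_of_tendsto' hU hnull)
    (hL.mono_left hUl)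

section StoneSpace

variable {X : Type*} [TopologicalSpace X] [CompactSpace X] [T2Space X]
  [TotallyDisconnectedSpace X] [SecondCountableTopology X]

theorem countable_setOf_isClopen : {A : Set X | IsClopen A}.Countable := by
  have : Countable (TopologicalSpace.Clopens X) :=
    TopologicalSpace.Clopens.countable_iff_secondCountable.mpr inferInstance
  refine (Set.countable_range ((↑) : TopologicalSpace.Clopens X → Set X)).mono ?_
  exact fun A hA => ⟨⟨A, hA⟩, rfl⟩

theorem isCore_setOf_isClopen [MeasurableSpace X] [BorelSpace X] :
    IsCore {A : Set X | IsClopen A} := by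
  refine .of_exists_limit countable_setOf_isClopen (fun _ hA _ hB => hA.inter hB) ?_ ?_
  · rw [BorelSpace.measurable_eq (α := X), isTopologicalBasis_isClopen.borel_eq_generateFrom]
  · intro μs hμs hconv
    let P : ℕ → ProbabilityMeasure X := fun n => ⟨μs n, hμs n⟩
    obtain ⟨μ, hμ⟩ : ∃ μ, MapClusterPt μ atTop P := exists_clusterPt_of_compactSpace _
    refine ⟨μ, inferInstance, fun A hA => ?_⟩
    obtain ⟨L, hL⟩ := hconv A hA
    rwa [measure_eq_of_mapClusterPt_of_isClopen hμ hA hL]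

end StoneSpace

/-- The measurable space `E` is the Borel space of a second countable Stone space, that is, of
a compact Hausdorff totally disconnected topology on `E` itself. The topology is existentially
quantified because only the σ-algebra of `E` is given. -/
def IsStoneBorel (E : Type*) [MeasurableSpace E] : Prop :=
  ∃ _ : TopologicalSpace E, BorelSpace E ∧ CompactSpace E ∧ T2Space E ∧
    TotallyDisconnectedSpace E ∧ SecondCountableTopology E

theorem IsStoneBorel.of_measurableEquiv {E X : Type*} [MeasurableSpace E] [TopologicalSpace X]
    [CompactSpace X] [T2Space X] [TotallyDisconnectedSpace X] [SecondCountableTopology X]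
    [MeasurableSpace X] [BorelSpace X] (e : E ≃ᵐ X) : IsStoneBorel E := by
  let _ : TopologicalSpace E := .induced e inferInstance
  let h : E ≃ₜ X := e.toEquiv.toHomeomorphOfIsInducing ⟨rfl⟩
  have hborel : BorelSpace E := ⟨by
    rw [borel_comap, ← BorelSpace.measurable_eq, e.measurableEmbedding.comap_eq]⟩
  exact ⟨inferInstance, hborel, h.symm.compactSpace, h.symm.t2Space,
    h.symm.totallyDisconnectedSpace, h.secondCountableTopology⟩

theorem borel_eq_top_of_countable (X : Type*) [Countable X] [TopologicalSpace X] [T1Space X] :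
    borel X = ⊤ := by
  borelize X
  exact top_le_iff.mp fun s _ => s.to_countable.measurableSet

theorem isStoneBorel_of_standardBorelSpace (E : Type*) [MeasurableSpace E]
    [StandardBorelSpace E] : IsStoneBorel E := by
  by_cases hE : Countable E
  · rcases finite_or_infinite E with _ | _
    · let _ : TopologicalSpace E := ⊥
      have : DiscreteTopology E := ⟨rfl⟩
      exact .of_measurableEquiv (.refl E)
    · have : BorelSpace ℕ∞ := ⟨(borel_eq_top_of_countable ℕ∞).symm⟩
      obtain ⟨e⟩ := nonempty_equiv_of_countable (α := E) (β := ℕ∞)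
      exact .of_measurableEquiv (PolishSpace.Equiv.measurableEquiv e)
  · exact .of_measurableEquiv (PolishSpace.measurableEquivNatBoolOfNotCountable hE)

theorem isClopen_image_comp_perm {ι E : Type*} [TopologicalSpace E] (σ : Equiv.Perm ι)
    {A : Set (ι → E)} (hA : IsClopen A) : IsClopen ((fun ω => ω ∘ σ) '' A) :=
  let h : (ι → E) ≃ₜ (ι → E) := (Homeomorph.piCongrLeft (Y := fun _ => E) σ).symm
  ⟨h.isClosed_image.mpr hA.isClosed, h.isOpen_image.mpr hA.isOpen⟩

theorem exists_shift_invariant_countable_core_general (ι E : Type*) [Countable ι]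
    [MeasurableSpace E] [StandardBorelSpace E] :
    ∃ 𝒞 : Set (Set (ι → E)),
      IsCore 𝒞 ∧ ∀ A ∈ 𝒞, ∀ σ : Equiv.Perm ι, (fun ω => ω ∘ σ) '' A ∈ 𝒞 := by
  obtain ⟨_, _, _, _, _, _⟩ := isStoneBorel_of_standardBorelSpace E
  exact ⟨{A | IsClopen A}, isCore_setOf_isClopen, fun A hA σ => isClopen_image_comp_perm σ hA⟩

/-- **Existence of a translation-invariant countable core.** For a nonempty standard
Borel space `E` and `d ≥ 1`, the product space `Ω = E^{ℤᵈ}` admits a countable core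
that is invariant under all shifts `θ_j`, `j ∈ ℤᵈ`. -/
theorem exists_shift_invariant_countable_core
    (E : Type*) [MeasurableSpace E] [StandardBorelSpace E] [Nonempty E]
    (d : ℕ) (hd : 1 ≤ d) :
    ∃ 𝒞 : Set (Set ((Fin d → ℤ) → E)),
      IsCore 𝒞 ∧ ∀ A ∈ 𝒞, ∀ j : Fin d → ℤ, shift j '' A ∈ 𝒞 := by
  obtain ⟨𝒞, hcore, hperm⟩ := exists_shift_invariant_countable_core_general (Fin d → ℤ) E
  exact ⟨𝒞, hcore, fun A hA j => hperm A hA (Equiv.subRight j)⟩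

end GibbsMeta
end
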